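/- arXiv:2105.15044 — 5 statements merged into one kernel-verified Lean document; each statement's English description precedes it below -/
import Mathlib

section
/- Let m ≥ 1 be an integer, let H_0, …, H_m be real Hilbert spaces, for each n ∈ {1,…,m} let U_n : H_{n−1} → H_n be a bounded linear operator and Q_n : H_n → H_n a firmly nonexpansive operator. Define θ_0 = 1 and θ_n = Σ_{i=1}^n θ_{i−1} ‖U_n ∘ ⋯ ∘ U_i‖ for n = 1, …, m, where ‖·‖ is the operator norm. Then the composition S = Q_m ∘ U_m ∘ ⋯ ∘ Q_1 ∘ U_1 is Lipschitz with constant θ_m / 2^{m−1}, i.e. ‖S z − S z′‖ ≤ (θ_m / 2^{m−1}) ‖z − z′‖ for all z, z′ ∈ H_0. -/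
/-!
A firmly nonexpansive `Q` is the average of the identity and a nonexpansive map `R = 2 Q - Id`.
Writing `dₙ` for the difference of the two trajectories after layer `n`, this gives
`dₙ₊₁ = (U dₙ + rₙ₊₁) / 2` with `‖rₙ₊₁‖ ≤ ‖U dₙ‖`. Expanding the linear part repeatedly, the image
of `dₙ` under the next `k` linear operators satisfies
`‖U ⋯ U dₙ‖ ≤ 2⁻ⁿ (∑_{j ≤ n} θⱼ ‖U_{n+k} ∘ ⋯ ∘ U_{j+1}‖) ‖d₀‖` (`norm_chainComp_chainNet_le`);
at `k = 1` the sum is `θₙ₊₁`, and the induction feeds this case back in to bound `‖rₙ₊₁‖`.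
The result is the case `n = m - 1`, `k = 1`, since `Q m` is nonexpansive.
-/

noncomputable section

open Finset

/-- The composition `U_{i+k-1} ∘ ⋯ ∘ U_i : H i →L H (i+k)` of `k` consecutive links of the
chain of operators `U n : H n →L H (n+1)` (the identity when `k = 0`). -/
def chainComp {H : ℕ → Type*} [∀ n, NormedAddCommGroup (H n)] [∀ n, NormedSpace ℝ (H n)]
    (U : ∀ n, H n →L[ℝ] H (n + 1)) : ∀ (i k : ℕ), H i →L[ℝ] H (i + k)
  | _, 0 => ContinuousLinearMap.id ℝ _
  | i, k + 1 => (U (i + k)).comp (chainComp U i k)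

/-- The network `Q_k ∘ U_k ∘ ⋯ ∘ Q_1 ∘ U_1 : H 0 → H k`, where the `n`-th layer (`1 ≤ n ≤ k`)
is `Q n ∘ U (n-1)` (zero-based indexing of the linear operators: `U (n-1)` is the paper's `Uₙ`). -/
def chainNet {H : ℕ → Type*} [∀ n, NormedAddCommGroup (H n)] [∀ n, NormedSpace ℝ (H n)]
    (U : ∀ n, H n →L[ℝ] H (n + 1)) (Q : ∀ n, H n → H n) : ∀ k, H 0 → H k
  | 0 => id
  | k + 1 => fun z => Q (k + 1) (U k (chainNet U Q k z))

/-- Peeling off the first operator of a chain instead of the last. The two vectors live in the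
propositionally equal spaces `H (i + 1 + k)` and `H (i + (k + 1))`, so they are compared in the
sigma type. -/
lemma sigma_chainComp_succ {H : ℕ → Type*} [∀ n, NormedAddCommGroup (H n)]
    [∀ n, NormedSpace ℝ (H n)] (U : ∀ n, H n →L[ℝ] H (n + 1)) (i : ℕ) (x : H i) (k : ℕ) :
    (⟨i + 1 + k, chainComp U (i + 1) k (U i x)⟩ : Σ n, H n)
      = ⟨i + (k + 1), chainComp U i (k + 1) x⟩ := by
  induction k with
  | zero => rfl
  | succ k ih =>
    exact congrArg (fun p : Σ n, H n => (⟨p.1 + 1, U p.1 p.2⟩ : Σ n, H n)) ih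

lemma norm_chainComp_succ {H : ℕ → Type*} [∀ n, NormedAddCommGroup (H n)]
    [∀ n, NormedSpace ℝ (H n)] (U : ∀ n, H n →L[ℝ] H (n + 1)) (i : ℕ) (x : H i) (k : ℕ) :
    ‖chainComp U (i + 1) k (U i x)‖ = ‖chainComp U i (k + 1) x‖ :=
  congrArg (fun p : Σ n, H n => ‖p.2‖) (sigma_chainComp_succ U i x k)

/-- The reflection `2 Q - Id` of a firmly nonexpansive map is nonexpansive, written for the
differences `d = Q x - Q y` and `v = x - y`. -/
lemma norm_two_smul_sub_le {E : Type*} [NormedAddCommGroup E] [InnerProductSpace ℝ E] {d v : E}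
    (h : ‖d‖ ^ 2 + ‖v - d‖ ^ 2 ≤ ‖v‖ ^ 2) : ‖(2 : ℝ) • d - v‖ ≤ ‖v‖ := by
  have hp := parallelogram_law_with_norm ℝ d (v - d)
  rw [show d + (v - d) = v by abel, show d - (v - d) = (2 : ℝ) • d - v by rw [two_smul]; abel]
    at hp
  exact le_of_sq_le_sq (by nlinarith) (norm_nonneg v)

/-- The main estimate: the image under the next `k` linear operators of the difference of two
trajectories after `n` layers. -/
lemma norm_chainComp_chainNet_le {H : ℕ → Type*} [∀ n, NormedAddCommGroup (H n)]
    [∀ n, InnerProductSpace ℝ (H n)] (U : ∀ n, H n →L[ℝ] H (n + 1)) (Q : ∀ n, H n → H n) (m : ℕ)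
    (hQ : ∀ n, 1 ≤ n → n ≤ m → ∀ x y : H n,
      ‖Q n x - Q n y‖ ^ 2 + ‖(x - Q n x) - (y - Q n y)‖ ^ 2 ≤ ‖x - y‖ ^ 2)
    (θ : ℕ → ℝ) (hθ0 : θ 0 = 1)
    (hθ : ∀ n, n + 1 ≤ m →
      θ (n + 1) = ∑ j ∈ Finset.range (n + 1), θ j * ‖chainComp U j (n + 1 - j)‖)
    (z z' : H 0) (n : ℕ) (hn : n ≤ m) (k : ℕ) :
    ‖chainComp U n k (chainNet U Q n z - chainNet U Q n z')‖
      ≤ (∑ j ∈ Finset.range (n + 1), θ j * ‖chainComp U j (n + k - j)‖) / 2 ^ n * ‖z - z'‖ := by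
  induction n generalizing k with
  | zero =>
    have h := (chainComp U 0 k).le_opNorm (z - z')
    have hk : 0 + k - 0 = k := by omega
    rw [Finset.sum_range_one, hk, hθ0, pow_zero, div_one, one_mul]
    exact h
  | succ n ih =>
    specialize ih (by omega)
    set e := chainNet U Q n z - chainNet U Q n z' with he
    set d := chainNet U Q (n + 1) z - chainNet U Q (n + 1) z' with hd
    set r := (2 : ℝ) • d - U n e with hr
    have hrle : ‖r‖ ≤ ‖U n e‖ := by
      apply norm_two_smul_sub_le
      have h := hQ (n + 1) (by omega) hn (U n (chainNet U Q n z)) (U n (chainNet U Q n z'))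
      rw [sub_sub_sub_comm, ← map_sub] at h
      exact h
    have hy : ‖U n e‖ ≤ θ (n + 1) / 2 ^ n * ‖z - z'‖ := by
      rw [hθ n hn]
      exact ih 1
    have hdec : chainComp U (n + 1) k d
        = (1 / 2 : ℝ) • (chainComp U (n + 1) k (U n e) + chainComp U (n + 1) k r) := by
      rw [← map_add, ← map_smul, hr, add_sub_cancel, smul_smul]
      norm_num
    have h1 := ih (k + 1)
    rw [← norm_chainComp_succ] at h1
    have h2 : ‖chainComp U (n + 1) k r‖
        ≤ ‖chainComp U (n + 1) k‖ * (θ (n + 1) / 2 ^ n * ‖z - z'‖) :=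
      (chainComp U (n + 1) k).le_opNorm_of_le (hrle.trans hy)
    have hk : n + 1 + k - (n + 1) = k := by omega
    rw [Finset.sum_range_succ, hk, hdec, norm_smul, Real.norm_of_nonneg (by norm_num)]
    rw [show n + (k + 1) = n + 1 + k by omega] at h1
    have h3 := norm_add_le (chainComp U (n + 1) k (U n e)) (chainComp U (n + 1) k r)
    refine (mul_le_mul_of_nonneg_left (h3.trans (add_le_add h1 h2)) (by norm_num)).trans_eq ?_
    rw [pow_succ]
    ring

theorem statement0
    (m : ℕ) (hm : 1 ≤ m)
    (H : ℕ → Type*) [∀ n, NormedAddCommGroup (H n)] [∀ n, InnerProductSpace ℝ (H n)]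
    [∀ n, CompleteSpace (H n)] [∀ n, Nontrivial (H n)]
    (U : ∀ n, H n →L[ℝ] H (n + 1))
    (Q : ∀ n, H n → H n)
    (hQ : ∀ n, 1 ≤ n → n ≤ m → ∀ x y : H n,
      ‖Q n x - Q n y‖ ^ 2 + ‖(x - Q n x) - (y - Q n y)‖ ^ 2 ≤ ‖x - y‖ ^ 2)
    (θ : ℕ → ℝ) (hθ0 : θ 0 = 1)
    (hθ : ∀ n, 1 ≤ n → n ≤ m →
      θ n = ∑ i ∈ Finset.Icc 1 n, θ (i - 1) * ‖chainComp U (i - 1) (n - (i - 1))‖) :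
    ∀ z z' : H 0,
      ‖chainNet U Q m z - chainNet U Q m z'‖ ≤ θ m / 2 ^ (m - 1) * ‖z - z'‖ := by
  intro z z'
  have hθ' : ∀ n, n + 1 ≤ m →
      θ (n + 1) = ∑ j ∈ Finset.range (n + 1), θ j * ‖chainComp U j (n + 1 - j)‖ := by
    intro n hn
    rw [hθ (n + 1) (by omega) hn, ← Finset.Ico_add_one_right_eq_Icc,
      Finset.sum_Ico_eq_sum_range]
    refine Finset.sum_congr (by simp) fun j _ => ?_
    rw [Nat.add_sub_cancel_left]
  obtain ⟨n, rfl⟩ : ∃ n, m = n + 1 := ⟨m - 1, by omega⟩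
  have h := norm_chainComp_chainNet_le U Q (n + 1) hQ θ hθ0 hθ' z z' n (by omega) 1
  rw [← hθ' n le_rfl] at h
  have hq := hQ (n + 1) (by omega) le_rfl (U n (chainNet U Q n z)) (U n (chainNet U Q n z'))
  rw [← map_sub (U n)] at hq
  -- firm nonexpansiveness in particular makes the last layer nonexpansive
  have hle : ‖chainNet U Q (n + 1) z - chainNet U Q (n + 1) z'‖
      ≤ ‖U n (chainNet U Q n z - chainNet U Q n z')‖ :=
    le_of_sq_le_sq ((le_add_of_nonneg_right (sq_nonneg _)).trans hq) (norm_nonneg _)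
  exact hle.trans h
end
end

section
/- For every 1 ≤ i ≤ n ≤ m, the composition U_n ∘ ⋯ ∘ U_i : H × H → H × H is given by (x, b) ↦ ( W_{i,n} x + W̃_{i,n} b , η_{i,n} b ), where W_{i,n} = W_n ∘ ⋯ ∘ W_i (the identity when the composition is empty) and W̃_{i,n} = Σ_{j=i}^{n−1} λ_j η_{i,j−1} (W_n ∘ ⋯ ∘ W_{j+1}) + λ_n η_{i,n−1} Id. -/
/-!
The composition formula is proved by induction on `n`, starting at `n = i`. Applying
`U_{n+1}` to `(W_{i,n} x + W̃_{i,n} b, η_{i,n} b)` gives the second component `η_{i,n+1} b`, and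
the first component is the right one because of the recursion
`W̃_{i,n+1} = W_{n+1} ∘ W̃_{i,n} + λ_{n+1} η_{i,n} Id` (`Wt_succ`).
-/

noncomputable section

open Finset

variable {H : Type*} [NormedAddCommGroup H] [InnerProductSpace ℝ H]

/-- Build the pair `(x, b)` in the `ℓ²` product space `H × H`. -/
def mkP (x b : H) : WithLp 2 (H × H) := (WithLp.equiv 2 (H × H)).symm (x, b)

/-- First component of an element of the product space. -/
def fstP (z : WithLp 2 (H × H)) : H := (WithLp.equiv 2 (H × H) z).1

/-- Second component of an element of the product space. -/
def sndP (z : WithLp 2 (H × H)) : H := (WithLp.equiv 2 (H × H) z).2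

/-- `(x, b) ↦ x` as a continuous linear map on the `ℓ²` product. -/
def fstL : WithLp 2 (H × H) →L[ℝ] H :=
  (ContinuousLinearMap.fst ℝ H H).comp
    (WithLp.prodContinuousLinearEquiv 2 ℝ H H).toContinuousLinearMap

/-- `(x, b) ↦ b` as a continuous linear map on the `ℓ²` product. -/
def sndL : WithLp 2 (H × H) →L[ℝ] H :=
  (ContinuousLinearMap.snd ℝ H H).comp
    (WithLp.prodContinuousLinearEquiv 2 ℝ H H).toContinuousLinearMap

/-- `Uₙ(x, b) = (Wₙ x + λₙ b, ηₙ b)` as a continuous linear map on the product space. -/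
def Uop (W : ℕ → H →L[ℝ] H) (lam eta : ℕ → ℝ) (n : ℕ) :
    WithLp 2 (H × H) →L[ℝ] WithLp 2 (H × H) :=
  ((WithLp.prodContinuousLinearEquiv 2 ℝ H H).symm.toContinuousLinearMap).comp
    (((((W n).comp (ContinuousLinearMap.fst ℝ H H)) + lam n • (ContinuousLinearMap.snd ℝ H H)).prod
        (eta n • (ContinuousLinearMap.snd ℝ H H))).comp
      (WithLp.prodContinuousLinearEquiv 2 ℝ H H).toContinuousLinearMap)

/-- Composition `Aₙ ∘ ⋯ ∘ Aᵢ` (the identity when `n < i`, i.e. when the composition is empty). -/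
def opComp {E : Type*} [NormedAddCommGroup E] [NormedSpace ℝ E]
    (A : ℕ → E →L[ℝ] E) (i : ℕ) : ℕ → (E →L[ℝ] E)
  | 0 => 1
  | n + 1 => if n + 1 < i then 1 else (A (n + 1)).comp (opComp A i n)

/-- `η_{i,j} = η_j ⋯ η_i` if `j ≥ i`, and `1` otherwise. -/
def etaP (eta : ℕ → ℝ) (i j : ℕ) : ℝ := ∏ k ∈ Finset.Icc i j, eta k

/-- `β_{i,n,p} = ∏_{j=i}^n β_p^{(j)}`. -/
def betaC (beta : ℕ → ℕ → ℝ) (i n p : ℕ) : ℝ := ∏ j ∈ Finset.Icc i n, beta j p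

/-- `β̃_{i,n,p} = Σ_{j=i}^{n−1} (∏_{l=j+1}^n β_p^{(l)}) λ_j η_{i,j−1} + λ_n η_{i,n−1}`. -/
def betaT (beta : ℕ → ℕ → ℝ) (lam eta : ℕ → ℝ) (i n p : ℕ) : ℝ :=
  (∑ j ∈ Finset.Icc i (n - 1), (∏ l ∈ Finset.Icc (j + 1) n, beta l p) * lam j * etaP eta i (j - 1))
    + lam n * etaP eta i (n - 1)

/-- The operator `W̃_{i,n} = Σ_{j=i}^{n−1} λ_j η_{i,j−1} (Wₙ ∘ ⋯ ∘ W_{j+1}) + λ_n η_{i,n−1} Id`. -/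
def Wt (W : ℕ → H →L[ℝ] H) (lam eta : ℕ → ℝ) (i n : ℕ) : H →L[ℝ] H :=
  (∑ j ∈ Finset.Icc i (n - 1), (lam j * etaP eta i (j - 1)) • opComp W (j + 1) n)
    + (lam n * etaP eta i (n - 1)) • (1 : H →L[ℝ] H)

/-- `a_{i,n}`. -/
def aC (beta : ℕ → ℕ → ℝ) (lam eta : ℕ → ℝ) (i n : ℕ) : ℝ :=
  (1 / 2) * ⨆ p : ℕ,
    (betaC beta i n p ^ 2 + betaT beta lam eta i n p ^ 2 + etaP eta i n ^ 2
      + Real.sqrt ((betaC beta i n p ^ 2 + betaT beta lam eta i n p ^ 2 + etaP eta i n ^ 2) ^ 2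
          - 4 * betaC beta i n p ^ 2 * etaP eta i n ^ 2))

/-- `ā_{i,n} = sup_p (β_{i,n,p}² + β̃_{i,n,p}²)`. -/
def aBar (beta : ℕ → ℕ → ℝ) (lam eta : ℕ → ℝ) (i n : ℕ) : ℝ :=
  ⨆ p : ℕ, (betaC beta i n p ^ 2 + betaT beta lam eta i n p ^ 2)

/-- `Qₙ(x, b) = (Rₙ x, b)`. -/
def Qop (R : ℕ → H → H) (n : ℕ) (z : WithLp 2 (H × H)) : WithLp 2 (H × H) :=
  mkP (R n (fstP z)) (sndP z)

/-- The virtual network `Qₙ ∘ Uₙ ∘ ⋯ ∘ Q₁ ∘ U₁`. -/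
def net (U : ℕ → WithLp 2 (H × H) →L[ℝ] WithLp 2 (H × H))
    (Q : ℕ → WithLp 2 (H × H) → WithLp 2 (H × H)) :
    ℕ → (WithLp 2 (H × H) → WithLp 2 (H × H))
  | 0 => id
  | n + 1 => fun z => Q (n + 1) (U (n + 1) (net U Q n z))

/-- `Ū_m (x, b) = W_m x + λ_m b` as a continuous linear map to `H`. -/
def Ubar (W : ℕ → H →L[ℝ] H) (lam : ℕ → ℝ) (m : ℕ) : WithLp 2 (H × H) →L[ℝ] H :=
  ((W m).comp fstL) + lam m • sndL

/-- `Û₁ b = (λ₁ b, η₁ b)`. -/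
def Uhat1a (lam eta : ℕ → ℝ) : H →L[ℝ] WithLp 2 (H × H) :=
  ((WithLp.prodContinuousLinearEquiv 2 ℝ H H).symm.toContinuousLinearMap).comp
    ((lam 1 • (1 : H →L[ℝ] H)).prod (eta 1 • (1 : H →L[ℝ] H)))

/-- `Û₁ b = (W₁ b + λ₁ b, η₁ b)`. -/
def Uhat1b (W : ℕ → H →L[ℝ] H) (lam eta : ℕ → ℝ) : H →L[ℝ] WithLp 2 (H × H) :=
  ((WithLp.prodContinuousLinearEquiv 2 ℝ H H).symm.toContinuousLinearMap).comp
    ((W 1 + lam 1 • (1 : H →L[ℝ] H)).prod (eta 1 • (1 : H →L[ℝ] H)))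

/-- The chain `Qₙ ∘ Uₙ ∘ ⋯ ∘ Q₂ ∘ U₂ ∘ Q₁ ∘ Û₁` (for `n ≥ 1`), fed with an input in `H`. -/
def midNet (U : ℕ → WithLp 2 (H × H) →L[ℝ] WithLp 2 (H × H))
    (Q : ℕ → WithLp 2 (H × H) → WithLp 2 (H × H)) (U1 : H → WithLp 2 (H × H)) :
    ℕ → (H → WithLp 2 (H × H))
  | 0 => U1
  | 1 => fun b => Q 1 (U1 b)
  | n + 2 => fun b => Q (n + 2) (U (n + 2) (midNet U Q U1 (n + 1) b))

theorem Uop_mkP (W : ℕ → H →L[ℝ] H) (lam eta : ℕ → ℝ) (n : ℕ) (x b : H) :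
    Uop W lam eta n (mkP x b) = mkP (W n x + lam n • b) (eta n • b) := rfl

theorem opComp_of_lt {E : Type*} [NormedAddCommGroup E] [NormedSpace ℝ E]
    (A : ℕ → E →L[ℝ] E) {i n : ℕ} (h : n < i) : opComp A i n = 1 := by
  cases n with
  | zero => rfl
  | succ n => simp [opComp, h]

theorem opComp_succ {E : Type*} [NormedAddCommGroup E] [NormedSpace ℝ E]
    (A : ℕ → E →L[ℝ] E) {i n : ℕ} (h : i ≤ n + 1) :
    opComp A i (n + 1) = (A (n + 1)).comp (opComp A i n) := by
  simp [opComp, Nat.not_lt.mpr h]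

theorem opComp_self {E : Type*} [NormedAddCommGroup E] [NormedSpace ℝ E]
    (A : ℕ → E →L[ℝ] E) {i : ℕ} (hi : 1 ≤ i) : opComp A i i = A i := by
  obtain ⟨k, rfl⟩ := Nat.exists_eq_add_of_le' hi
  rw [opComp_succ A le_rfl, opComp_of_lt A (Nat.lt_succ_self k)]
  rfl

theorem Wt_self (W : ℕ → H →L[ℝ] H) (lam eta : ℕ → ℝ) {i : ℕ} (hi : 1 ≤ i) :
    Wt W lam eta i i = lam i • (1 : H →L[ℝ] H) := by
  have h : Finset.Icc i (i - 1) = ∅ := Finset.Icc_eq_empty (by omega)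
  simp [Wt, etaP, h]

/-- The isolated last term `λ_n η_{i,n-1} Id` of `W̃_{i,n}` becomes, after composing with
`W_{n+1}`, the summand `j = n` of `W̃_{i,n+1}`. -/
theorem Wt_succ (W : ℕ → H →L[ℝ] H) (lam eta : ℕ → ℝ) {i n : ℕ} (hi : 1 ≤ i) (hin : i ≤ n)
    (b : H) :
    Wt W lam eta i (n + 1) b
      = W (n + 1) (Wt W lam eta i n b) + (lam (n + 1) * etaP eta i n) • b := by
  obtain ⟨k, rfl⟩ := Nat.exists_eq_add_of_le' (hi.trans hin)
  have hsum : ∀ j ∈ Finset.Icc i k,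
      (lam j * etaP eta i (j - 1)) • opComp W (j + 1) (k + 1 + 1) b
        = (lam j * etaP eta i (j - 1)) • W (k + 1 + 1) (opComp W (j + 1) (k + 1) b) := by
    intro j hj
    have := (Finset.mem_Icc.mp hj).2
    rw [opComp_succ W (by omega)]
    rfl
  simp only [Wt, Nat.add_sub_cancel, add_apply, _root_.sum_apply,
    smul_apply, one_apply_eq_self, map_add, map_sum, map_smul]
  rw [Finset.sum_Icc_succ_top hin, Finset.sum_congr rfl hsum, opComp_self W (by omega),
    Nat.add_sub_cancel]

theorem statement3 (m : ℕ) (hm : 1 ≤ m) [CompleteSpace H]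
    (v : HilbertBasis ℕ ℝ H)
    (W : ℕ → H →L[ℝ] H) (beta : ℕ → ℕ → ℝ) (lam eta : ℕ → ℝ)
    (hW : ∀ n, 1 ≤ n → n ≤ m → ∀ p : ℕ, W n (v p) = beta n p • v p)
    (hlam : ∀ n, 1 ≤ n → n ≤ m → 0 < lam n)
    (heta : ∀ n, 1 ≤ n → n ≤ m → 0 < eta n)
    (i n : ℕ) (hi : 1 ≤ i) (hin : i ≤ n) (hnm : n ≤ m) (x b : H) :
    opComp (Uop W lam eta) i n (mkP x b)
      = mkP (opComp W i n x + Wt W lam eta i n b) (etaP eta i n • b) := by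
  induction n, hin using Nat.le_induction with
  | base =>
    rw [opComp_self _ hi, opComp_self _ hi, Uop_mkP, Wt_self W lam eta hi]
    simp [etaP]
  | succ n hin ih =>
    have heta_succ : etaP eta i (n + 1) = eta (n + 1) * etaP eta i n := by
      rw [etaP, Finset.prod_Icc_succ_top (by omega), mul_comm, etaP]
    rw [opComp_succ _ (by omega), opComp_succ _ (by omega), ContinuousLinearMap.comp_apply,
      ContinuousLinearMap.comp_apply, ih (by omega), Uop_mkP, Wt_succ W lam eta hi hin,
      heta_succ, map_add, smul_smul, smul_smul, add_assoc]
end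
end

section
/- For every 1 ≤ i ≤ n ≤ m, the operator norm of the composition U_n ∘ ⋯ ∘ U_i : H × H → H × H equals √(a_{i,n}), where a_{i,n} = (1/2) sup_{p ∈ ℕ} ( β_{i,n,p}² + β̃_{i,n,p}² + η_{i,n}² + √( (β_{i,n,p}² + β̃_{i,n,p}² + η_{i,n}²)² − 4 β_{i,n,p}² η_{i,n}² ) ). -/
/-!
In the coordinates of the Hilbert basis, `T = U_n ∘ ⋯ ∘ U_i` splits into the `2 × 2` blocks
`(x, b) ↦ (B x + C b, E b)` with `B = β_{i,n,p}`, `C = β̃_{i,n,p}`, `E = η_{i,n}`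
(`coord_opComp`, by induction on `n`). The number
`blockMax B C E = (s + √(s² - 4 B² E²)) / 2`, `s = B² + C² + E²`, is the largest eigenvalue of the
Gram matrix of such a block, that is, the largest root of `M² - s M + B² E² = 0`. It therefore
bounds the quadratic form `(B x + C b)² + (E b)²` by `M (x² + b²)` (`block_le`), and an eigenvector
attains this bound (`block_attained`). Parseval's identity turns the first fact into
`‖T‖² ≤ sup_p M_p`; testing `T` on `(x v_p, b v_p)` with `(x, b)` an eigenvector gives
`M_p ≤ ‖T‖²` for every `p`, which also shows that the supremum is over a bounded family.
-/

noncomputable section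

open Finset

variable {H : Type*} [NormedAddCommGroup H] [InnerProductSpace ℝ H]

/-- The largest eigenvalue of `Aᵀ A` for `A = !![B, C; 0, E]`. -/
def blockMax (B C E : ℝ) : ℝ :=
  (B ^ 2 + C ^ 2 + E ^ 2
    + Real.sqrt ((B ^ 2 + C ^ 2 + E ^ 2) ^ 2 - 4 * B ^ 2 * E ^ 2)) / 2

/-- The characteristic equation of `Aᵀ A`; in the form `det (M - Aᵀ A) = 0`. -/
lemma blockMax_char (B C E : ℝ) :
    (blockMax B C E - B ^ 2) * (blockMax B C E - C ^ 2 - E ^ 2) = B ^ 2 * C ^ 2 := by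
  have hd : 0 ≤ (B ^ 2 + C ^ 2 + E ^ 2) ^ 2 - 4 * B ^ 2 * E ^ 2 := by
    have h : (B ^ 2 + C ^ 2 + E ^ 2) ^ 2 - 4 * B ^ 2 * E ^ 2
        = (B ^ 2 - E ^ 2) ^ 2 + C ^ 4 + 2 * B ^ 2 * C ^ 2 + 2 * C ^ 2 * E ^ 2 := by ring
    rw [h]; positivity
  have hs := Real.sq_sqrt hd
  unfold blockMax
  linear_combination hs / 4

lemma blockMax_trace (B C E : ℝ) : B ^ 2 + C ^ 2 + E ^ 2 ≤ 2 * blockMax B C E := by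
  have := Real.sqrt_nonneg ((B ^ 2 + C ^ 2 + E ^ 2) ^ 2 - 4 * B ^ 2 * E ^ 2)
  unfold blockMax
  linarith

lemma nonneg_of_mul_add {P Q : ℝ} (h : 0 ≤ P * Q) (h' : 0 ≤ P + Q) : 0 ≤ P := by
  by_contra! hP
  nlinarith

lemma block_le (B C E x b : ℝ) :
    (B * x + C * b) ^ 2 + (E * b) ^ 2 ≤ blockMax B C E * (x ^ 2 + b ^ 2) := by
  have hc := blockMax_char B C E
  have ht := blockMax_trace B C E
  set M := blockMax B C E
  have hpos : 0 ≤ B ^ 2 * C ^ 2 := by positivity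
  have hP : 0 ≤ M - B ^ 2 := nonneg_of_mul_add (hc ▸ hpos) (by linarith)
  have hQ : 0 ≤ M - C ^ 2 - E ^ 2 :=
    nonneg_of_mul_add (Q := M - B ^ 2) (by rw [mul_comm, hc]; exact hpos) (by linarith)
  -- The form `P x² - 2 B C x b + Q b²` has zero determinant `P Q = B² C²`.
  suffices h : 0 ≤ (M - B ^ 2) * x ^ 2 - 2 * (B * C) * x * b + (M - C ^ 2 - E ^ 2) * b ^ 2 by
    linarith
  rcases hP.eq_or_lt with h0 | h0
  · have hBC : B * C = 0 := by
      rw [← h0, zero_mul] at hc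
      exact pow_eq_zero_iff (two_ne_zero) |>.1 (by rw [mul_pow]; exact hc.symm)
    rw [← h0, hBC]
    have := mul_nonneg hQ (sq_nonneg b)
    linarith
  · refine (mul_nonneg_iff_of_pos_left h0).1 ?_
    have h : (M - B ^ 2) *
        ((M - B ^ 2) * x ^ 2 - 2 * (B * C) * x * b + (M - C ^ 2 - E ^ 2) * b ^ 2)
        = ((M - B ^ 2) * x - B * C * b) ^ 2 := by
      linear_combination b ^ 2 * hc
    rw [h]; positivity

lemma block_attained (B C E : ℝ) : ∃ x b : ℝ, 0 < x ^ 2 + b ^ 2 ∧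
    (B * x + C * b) ^ 2 + (E * b) ^ 2 = blockMax B C E * (x ^ 2 + b ^ 2) := by
  have hc := blockMax_char B C E
  set M := blockMax B C E
  by_cases h0 : M - B ^ 2 = 0
  · exact ⟨1, 0, by norm_num, by linear_combination -h0⟩
  · refine ⟨B * C, M - B ^ 2, by positivity, ?_⟩
    linear_combination -(M - B ^ 2) * hc

lemma aC_eq (beta : ℕ → ℕ → ℝ) (lam eta : ℕ → ℝ) (i n : ℕ) :
    aC beta lam eta i n
      = ⨆ p, blockMax (betaC beta i n p) (betaT beta lam eta i n p) (etaP eta i n) := by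
  unfold aC blockMax
  rw [Real.mul_iSup_of_nonneg (by norm_num)]
  congr 1
  ext p
  ring

lemma etaP_succ (eta : ℕ → ℝ) {i n : ℕ} (h : i ≤ n + 1) :
    etaP eta i (n + 1) = etaP eta i n * eta (n + 1) :=
  Finset.prod_Icc_succ_top h _

lemma betaC_succ (beta : ℕ → ℕ → ℝ) {i n : ℕ} (h : i ≤ n + 1) (p : ℕ) :
    betaC beta i (n + 1) p = betaC beta i n p * beta (n + 1) p :=
  Finset.prod_Icc_succ_top h _

lemma betaT_self (beta : ℕ → ℕ → ℝ) (lam eta : ℕ → ℝ) (n p : ℕ) :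
    betaT beta lam eta (n + 1) (n + 1) p = lam (n + 1) := by
  simp [betaT, etaP]

lemma betaT_succ (beta : ℕ → ℕ → ℝ) (lam eta : ℕ → ℝ) {i n : ℕ} (hi : 1 ≤ i) (h : i ≤ n)
    (p : ℕ) : betaT beta lam eta i (n + 1) p
      = beta (n + 1) p * betaT beta lam eta i n p + lam (n + 1) * etaP eta i n := by
  obtain ⟨k, rfl⟩ : ∃ k, n = k + 1 := ⟨n - 1, by omega⟩
  simp only [betaT, Nat.add_sub_cancel]
  rw [Finset.sum_Icc_succ_top h, mul_add, Finset.mul_sum]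
  have hs : ∀ j ∈ Finset.Icc i k,
      (∏ l ∈ Finset.Icc (j + 1) (k + 1 + 1), beta l p) * lam j * etaP eta i (j - 1)
      = beta (k + 1 + 1) p *
        ((∏ l ∈ Finset.Icc (j + 1) (k + 1), beta l p) * lam j * etaP eta i (j - 1)) := by
    intro j hj
    rw [Finset.mem_Icc] at hj
    rw [Finset.prod_Icc_succ_top (by omega)]
    ring
  rw [Finset.sum_congr rfl hs]
  simp
  ring

/-- A bounded operator that is diagonal on the basis acts diagonally on all coordinates. -/
lemma inner_diag (v : HilbertBasis ℕ ℝ H) (A : H →L[ℝ] H) (c : ℕ → ℝ)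
    (hA : ∀ p, A (v p) = c p • v p) (p : ℕ) (x : H) :
    inner ℝ (v p) (A x) = c p * inner ℝ (v p) x := by
  have h : (innerSL ℝ (v p)).comp A = c p • innerSL ℝ (v p) := by
    refine ContinuousLinearMap.ext_on
      (Submodule.dense_iff_topologicalClosure_eq_top.2 v.dense_span) ?_
    rintro _ ⟨q, rfl⟩
    by_cases hpq : p = q
    · subst hpq
      simp [hA]
    · simp [hA, v.orthonormal.2 hpq]
  simpa using congrArg (fun f => f x) h

lemma Uop_fst (W : ℕ → H →L[ℝ] H) (lam eta : ℕ → ℝ) (n : ℕ) (z : WithLp 2 (H × H)) :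
    (Uop W lam eta n z).fst = W n z.fst + lam n • z.snd := rfl

lemma Uop_snd (W : ℕ → H →L[ℝ] H) (lam eta : ℕ → ℝ) (n : ℕ) (z : WithLp 2 (H × H)) :
    (Uop W lam eta n z).snd = eta n • z.snd := rfl

/-- The block form of `U_n ∘ ⋯ ∘ U_i` in coordinates. -/
lemma coord_opComp (m : ℕ) (v : HilbertBasis ℕ ℝ H)
    (W : ℕ → H →L[ℝ] H) (beta : ℕ → ℕ → ℝ) (lam eta : ℕ → ℝ)
    (hW : ∀ n, 1 ≤ n → n ≤ m → ∀ p : ℕ, W n (v p) = beta n p • v p)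
    (i n : ℕ) (hi : 1 ≤ i) (hin : i ≤ n) (hnm : n ≤ m) (p : ℕ) (z : WithLp 2 (H × H)) :
    inner ℝ (v p) (opComp (Uop W lam eta) i n z).fst
        = betaC beta i n p * inner ℝ (v p) z.fst
          + betaT beta lam eta i n p * inner ℝ (v p) z.snd ∧
      inner ℝ (v p) (opComp (Uop W lam eta) i n z).snd
        = etaP eta i n * inner ℝ (v p) z.snd := by
  induction n with
  | zero => omega
  | succ n ih =>
    have hd := inner_diag v (W (n + 1)) (beta (n + 1)) (hW (n + 1) (by omega) hnm) p
    rw [opComp, if_neg (by omega), ContinuousLinearMap.comp_apply, Uop_fst, Uop_snd,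
      inner_add_right, hd, inner_smul_right, inner_smul_right]
    rcases hin.eq_or_lt with rfl | hlt
    · have h1 : opComp (Uop W lam eta) (n + 1) n = 1 := by
        cases n with
        | zero => rfl
        | succ k => rw [opComp, if_pos (by omega)]
      rw [h1, betaT_self]
      simp [betaC, etaP]
    · obtain ⟨h1, h2⟩ := ih (by omega) (by omega)
      rw [h1, h2, betaC_succ _ hin, etaP_succ _ hin, betaT_succ _ _ _ hi (by omega)]
      constructor <;> ring

/-- Parseval's identity on the product space. -/
lemma hasSum_norm_sq (v : HilbertBasis ℕ ℝ H) (z : WithLp 2 (H × H)) :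
    HasSum (fun p => (inner ℝ (v p) z.fst) ^ 2 + (inner ℝ (v p) z.snd) ^ 2) (‖z‖ ^ 2) := by
  have h : ∀ x : H, HasSum (fun p => (inner ℝ (v p) x) ^ 2) (‖x‖ ^ 2) := by
    intro x
    have := v.hasSum_inner_mul_inner x x
    rw [real_inner_self_eq_norm_sq] at this
    simpa only [real_inner_comm x, ← sq] using this
  rw [WithLp.prod_norm_sq_eq_of_L2]
  exact (h _).add (h _)

theorem statement4 (m : ℕ) (hm : 1 ≤ m) [CompleteSpace H]
    (v : HilbertBasis ℕ ℝ H)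
    (W : ℕ → H →L[ℝ] H) (beta : ℕ → ℕ → ℝ) (lam eta : ℕ → ℝ)
    (hW : ∀ n, 1 ≤ n → n ≤ m → ∀ p : ℕ, W n (v p) = beta n p • v p)
    (hlam : ∀ n, 1 ≤ n → n ≤ m → 0 < lam n)
    (heta : ∀ n, 1 ≤ n → n ≤ m → 0 < eta n)
    (i n : ℕ) (hi : 1 ≤ i) (hin : i ≤ n) (hnm : n ≤ m) :
    ‖opComp (Uop W lam eta) i n‖ = Real.sqrt (aC beta lam eta i n) := by
  set T := opComp (Uop W lam eta) i n
  have hco := coord_opComp m v W beta lam eta hW i n hi hin hnm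
  rw [aC_eq]
  set M : ℕ → ℝ :=
    fun p => blockMax (betaC beta i n p) (betaT beta lam eta i n p) (etaP eta i n)
  have hlow : ∀ p, M p ≤ ‖T‖ ^ 2 := by
    intro p
    obtain ⟨x, b, hpos, hxb⟩ :=
      block_attained (betaC beta i n p) (betaT beta lam eta i n p) (etaP eta i n)
    let z : WithLp 2 (H × H) := WithLp.toLp 2 (x • v p, b • v p)
    have hx : inner ℝ (v p) z.fst = x := by
      simp [z, inner_smul_right, v.orthonormal.1 p]
    have hb : inner ℝ (v p) z.snd = b := by
      simp [z, inner_smul_right, v.orthonormal.1 p]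
    have hz : ‖z‖ ^ 2 = x ^ 2 + b ^ 2 := by
      rw [WithLp.prod_norm_sq_eq_of_L2]
      simp [z, norm_smul, v.orthonormal.1 p]
    have h1 := le_hasSum (hasSum_norm_sq v (T z)) p (fun _ _ => by positivity)
    rw [(hco p z).1, (hco p z).2, hx, hb, hxb, ← hz] at h1
    have h2 : ‖T z‖ ^ 2 ≤ ‖T‖ ^ 2 * ‖z‖ ^ 2 := by
      rw [← mul_pow]
      gcongr
      exact T.le_opNorm z
    exact le_of_mul_le_mul_right (h1.trans h2) (hz ▸ hpos)
  have hbdd : BddAbove (Set.range M) := ⟨‖T‖ ^ 2, by rintro _ ⟨p, rfl⟩; exact hlow p⟩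
  apply le_antisymm
  · refine T.opNorm_le_bound (Real.sqrt_nonneg _) fun z => ?_
    have hS : 0 ≤ ⨆ p, M p := by
      have := blockMax_trace (betaC beta i n 0) (betaT beta lam eta i n 0) (etaP eta i n)
      refine le_trans ?_ (le_ciSup hbdd 0)
      have : 0 ≤ 2 * M 0 := le_trans (by positivity) this
      linarith
    refine le_of_sq_le_sq ?_ (by positivity)
    rw [mul_pow, Real.sq_sqrt hS]
    refine hasSum_le (fun p => ?_) (hasSum_norm_sq v (T z))
      ((hasSum_norm_sq v z).mul_left (⨆ p, M p))
    rw [(hco p z).1, (hco p z).2]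
    refine (block_le _ _ _ _ _).trans ?_
    gcongr
    exact le_ciSup hbdd p
  · exact Real.sqrt_le_iff.2 ⟨norm_nonneg _, ciSup_le hlow⟩
end
end

section
/- Let H be a real Hilbert space, let F : H × H → H, and define S : H × H → H × H by S(x, b) = (F(x, b), b). If S is α-averaged for some α ∈ (0, 1) (for the product Hilbert norm ‖(x,b)‖² = ‖x‖² + ‖b‖²), then F(x, b₁) = F(x, b₂) for all x, b₁, b₂ ∈ H; that is, F does not depend on its second argument. -/
/-!
Comparing second components in `S = (1 - α) Id + α R` shows that `R` leaves the second component
fixed. For two points `(x, b₁)` and `(x, b₂)`, nonexpansiveness of `R` then reads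
`‖R₁(x, b₁) - R₁(x, b₂)‖² + ‖b₁ - b₂‖² ≤ ‖b₁ - b₂‖²`, so the first component `R₁` of `R`, and with
it `F(x, b) = (1 - α) x + α R₁(x, b)`, does not depend on `b`.
-/

noncomputable section

variable {H : Type*} [NormedAddCommGroup H] [InnerProductSpace ℝ H]

theorem statement9 (F : H × H → H) (α : ℝ) (hα : 0 < α) (hα1 : α < 1)
    (havg : ∃ R : WithLp 2 (H × H) → WithLp 2 (H × H),
      (∀ z z' : WithLp 2 (H × H), ‖R z - R z'‖ ≤ ‖z - z'‖) ∧
      ∀ z : WithLp 2 (H × H),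
        mkP (F (fstP z, sndP z)) (sndP z) = (1 - α) • z + α • R z) :
    ∀ (x : H) (b₁ b₂ : H), F (x, b₁) = F (x, b₂) := by
  obtain ⟨R, hR, hS⟩ := havg
  intro x b₁ b₂
  -- The second component of `R` is the identity, since that of the averaged map is.
  have hsnd : ∀ b : H, (R (mkP x b)).snd = b := by
    intro b
    have h : b = (1 - α) • b + α • (R (mkP x b)).snd := congrArg WithLp.snd (hS (mkP x b))
    have h' : α • (R (mkP x b)).snd = α • b := by
      rw [sub_smul, one_smul, sub_add] at h
      exact (sub_eq_zero.1 (sub_eq_self.1 h.symm)).symm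
    exact smul_right_injective H hα.ne' h'
  have hfst : ∀ b : H, F (x, b) = (1 - α) • x + α • (R (mkP x b)).fst := fun b =>
    congrArg WithLp.fst (hS (mkP x b))
  have hsq := pow_le_pow_left₀ (norm_nonneg _) (hR (mkP x b₁) (mkP x b₂)) 2
  have hz1 : (mkP x b₁ - mkP x b₂).fst = 0 := sub_self x
  have hz2 : (mkP x b₁ - mkP x b₂).snd = b₁ - b₂ := rfl
  rw [WithLp.prod_norm_sq_eq_of_L2, WithLp.prod_norm_sq_eq_of_L2, hz1, hz2,
    WithLp.sub_fst, WithLp.sub_snd, hsnd, hsnd, norm_zero] at hsq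
  have h0 : ‖(R (mkP x b₁)).fst - (R (mkP x b₂)).fst‖ = 0 := by
    apply pow_eq_zero_iff (two_ne_zero) |>.1
    apply le_antisymm _ (sq_nonneg _)
    linarith
  rw [hfst, hfst, sub_eq_zero.1 (norm_eq_zero.1 h0)]
end
end

section
/- For every 1 ≤ i ≤ n ≤ m, the operator norm of the bounded linear map H × H → H given by (x, b) ↦ W_{i,n} x + W̃_{i,n} b (the first component of U_n ∘ ⋯ ∘ U_i, where W_{i,n} = W_n ∘ ⋯ ∘ W_i and W̃_{i,n} = Σ_{j=i}^{n−1} λ_j η_{i,j−1} (W_n ∘ ⋯ ∘ W_{j+1}) + λ_n η_{i,n−1} Id) equals √( sup_{p ∈ ℕ} ( β_{i,n,p}² + β̃_{i,n,p}² ) ). -/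
/-!
Put `T = W_{i,n}` and `S = W̃_{i,n}`. Both are diagonal in the Hilbert basis, with eigenvalues
`a p = β_{i,n,p}` and `b p = β̃_{i,n,p}` (`opComp_apply_basis`, `Wt_apply_basis`), so the map
`L (x, y) = T x + S y` acts on the `p`-th coordinates as `(xₚ, yₚ) ↦ a p * xₚ + b p * yₚ`.
Cauchy–Schwarz in the plane for each `p`, summed with Parseval's identity, bounds `‖L‖ ^ 2` by
`sup (a p ^ 2 + b p ^ 2)`, and testing `L` on `(a p • v p, b p • v p)`, the equality case, gives
the reverse inequality (`norm_diag_add_diag`). The test vectors also show that the supremum is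
finite.
-/

noncomputable section

open Finset

variable {H : Type*} [NormedAddCommGroup H] [InnerProductSpace ℝ H]

/-- A bounded operator that is diagonal on a Hilbert basis acts diagonally on the coordinates of
every vector, since both sides are continuous in `x` and agree on the dense span of the basis. -/
theorem inner_basis_diag (v : HilbertBasis ℕ ℝ H) (T : H →L[ℝ] H) (a : ℕ → ℝ)
    (hT : ∀ p, T (v p) = a p • v p) (p : ℕ) (x : H) :
    inner ℝ (v p) (T x) = a p * inner ℝ (v p) x := by
  have h : (innerSL ℝ (v p)).comp T = a p • innerSL ℝ (v p) := by
    refine ContinuousLinearMap.ext_on (s := Set.range v) ?_ ?_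
    · rw [dense_iff_closure_eq, ← Submodule.topologicalClosure_coe, v.dense_span]
      rfl
    · rintro _ ⟨q, rfl⟩
      have ho := orthonormal_iff_ite.mp v.orthonormal p q
      simp only [ContinuousLinearMap.comp_apply, hT, map_smul, innerSL_apply_apply, smul_eq_mul,
        smul_apply, ho]
      split_ifs with hpq
      · rw [hpq]
      · simp
  simpa using congrArg (fun f : H →L[ℝ] ℝ => f x) h

theorem hasSum_sq_inner_basis (v : HilbertBasis ℕ ℝ H) (x : H) :
    HasSum (fun p => (inner ℝ (v p) x) ^ 2) (‖x‖ ^ 2) := by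
  have h := v.hasSum_inner_mul_inner x x
  rw [real_inner_self_eq_norm_sq] at h
  refine h.congr_fun ?_
  intro p
  rw [real_inner_comm, sq]

/-- The norm of `(x, y) ↦ T x + S y` on the `ℓ²` product, for `T` and `S` diagonal in the same
Hilbert basis. -/
theorem norm_diag_add_diag (v : HilbertBasis ℕ ℝ H) (T S : H →L[ℝ] H) (a b : ℕ → ℝ)
    (hT : ∀ p, T (v p) = a p • v p) (hS : ∀ p, S (v p) = b p • v p) :
    ‖T.comp fstL + S.comp sndL‖ = Real.sqrt (⨆ p, (a p ^ 2 + b p ^ 2)) := by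
  set L := T.comp fstL + S.comp sndL with hL
  have hLap : ∀ z : WithLp 2 (H × H), L z = T z.fst + S z.snd := fun z => rfl
  have hnorm : ∀ z : WithLp 2 (H × H), ‖z‖ ^ 2 = ‖z.fst‖ ^ 2 + ‖z.snd‖ ^ 2 :=
    fun z => WithLp.prod_norm_sq_eq_of_L2 z
  have hlow : ∀ p, a p ^ 2 + b p ^ 2 ≤ ‖L‖ ^ 2 := by
    intro p
    -- the equality case of Cauchy–Schwarz in the `p`-th coordinate plane
    let z : WithLp 2 (H × H) := WithLp.toLp 2 (a p • v p, b p • v p)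
    have hv : ‖v p‖ = 1 := v.orthonormal.1 p
    have h1 : L z = (a p ^ 2 + b p ^ 2) • v p := by
      rw [hLap]
      change T (a p • v p) + S (b p • v p) = _
      rw [map_smul, map_smul, hT, hS, smul_smul, smul_smul, ← add_smul, sq, sq]
    have h2 : ‖z‖ ^ 2 = a p ^ 2 + b p ^ 2 := by
      rw [hnorm]
      change ‖a p • v p‖ ^ 2 + ‖b p • v p‖ ^ 2 = _
      simp [norm_smul, hv]
    have h3 := L.le_opNorm z
    have hc : 0 ≤ a p ^ 2 + b p ^ 2 := by positivity
    rw [h1, norm_smul, hv, mul_one, Real.norm_of_nonneg hc] at h3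
    have h4 := pow_le_pow_left₀ hc h3 2
    rw [mul_pow, h2] at h4
    rcases hc.eq_or_lt with h0 | h0
    · rw [← h0]
      positivity
    · rw [sq (a p ^ 2 + b p ^ 2)] at h4
      exact le_of_mul_le_mul_right h4 h0
  have hbdd : BddAbove (Set.range fun p => a p ^ 2 + b p ^ 2) :=
    ⟨‖L‖ ^ 2, by rintro _ ⟨p, rfl⟩; exact hlow p⟩
  apply le_antisymm
  · refine L.opNorm_le_bound (Real.sqrt_nonneg _) fun z => ?_
    have hs0 : 0 ≤ ⨆ p, (a p ^ 2 + b p ^ 2) := Real.iSup_nonneg fun p => by positivity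
    refine le_of_sq_le_sq ?_ (by positivity)
    rw [mul_pow, Real.sq_sqrt hs0, hnorm]
    refine hasSum_le ?_ (hasSum_sq_inner_basis v (L z))
      (((hasSum_sq_inner_basis v z.fst).add (hasSum_sq_inner_basis v z.snd)).mul_left _)
    intro p
    rw [hLap, inner_add_right, inner_basis_diag v T a hT, inner_basis_diag v S b hS]
    set s := inner ℝ (v p) z.fst
    set t := inner ℝ (v p) z.snd
    calc (a p * s + b p * t) ^ 2 ≤ (a p ^ 2 + b p ^ 2) * (s ^ 2 + t ^ 2) := by
          nlinarith [sq_nonneg (a p * t - b p * s)]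
      _ ≤ _ := mul_le_mul_of_nonneg_right (le_ciSup hbdd p) (by positivity)
  · exact Real.sqrt_le_iff.mpr ⟨L.opNorm_nonneg, ciSup_le hlow⟩

/-- For `n < i` both the composition and the product are empty, whence no lower bound on `n`. -/
theorem opComp_apply_basis (m : ℕ) (v : ℕ → H) (W : ℕ → H →L[ℝ] H) (beta : ℕ → ℕ → ℝ)
    (hW : ∀ n, 1 ≤ n → n ≤ m → ∀ p : ℕ, W n (v p) = beta n p • v p)
    (i : ℕ) (hi : 1 ≤ i) (p n : ℕ) (hnm : n ≤ m) :
    opComp W i n (v p) = betaC beta i n p • v p := by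
  induction n with
  | zero =>
    have h : Finset.Icc i 0 = ∅ := Finset.Icc_eq_empty (by omega)
    simp [opComp, betaC, h]
  | succ n ih =>
    by_cases h : n + 1 < i
    · simp [opComp, betaC, h]
    · rw [opComp, if_neg h, ContinuousLinearMap.comp_apply, ih (by omega), map_smul,
        hW (n + 1) (by omega) hnm, smul_smul, betaC, betaC, Finset.prod_Icc_succ_top (by omega)]

theorem Wt_apply_basis (m : ℕ) (v : ℕ → H) (W : ℕ → H →L[ℝ] H) (beta : ℕ → ℕ → ℝ)
    (lam eta : ℕ → ℝ)
    (hW : ∀ n, 1 ≤ n → n ≤ m → ∀ p : ℕ, W n (v p) = beta n p • v p)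
    (i n : ℕ) (hnm : n ≤ m) (p : ℕ) :
    Wt W lam eta i n (v p) = betaT beta lam eta i n p • v p := by
  rw [Wt, betaT, add_apply, _root_.sum_apply, add_smul,
    Finset.sum_smul]
  congr 1
  refine Finset.sum_congr rfl fun j _ => ?_
  rw [smul_apply, opComp_apply_basis m v W beta hW (j + 1) (by omega) p n hnm,
    smul_smul, betaC]
  congr 1
  ring

theorem statement10 (m : ℕ) (hm : 1 ≤ m) [CompleteSpace H]
    (v : HilbertBasis ℕ ℝ H)
    (W : ℕ → H →L[ℝ] H) (beta : ℕ → ℕ → ℝ) (lam eta : ℕ → ℝ)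
    (hW : ∀ n, 1 ≤ n → n ≤ m → ∀ p : ℕ, W n (v p) = beta n p • v p)
    (hlam : ∀ n, 1 ≤ n → n ≤ m → 0 < lam n)
    (heta : ∀ n, 1 ≤ n → n ≤ m → 0 < eta n)
    (i n : ℕ) (hi : 1 ≤ i) (hin : i ≤ n) (hnm : n ≤ m) :
    ‖(opComp W i n).comp fstL + (Wt W lam eta i n).comp sndL‖
      = Real.sqrt (aBar beta lam eta i n) := by
  exact norm_diag_add_diag v _ _ _ _
    (fun p => opComp_apply_basis m v W beta hW i hi p n hnm)
    (fun p => Wt_apply_basis m v W beta lam eta hW i n hnm p)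
end
end
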